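/- Let u be a nonzero vector in E_tW and v a nonzero vector in E*_rW. Then for 0 ≤ i, j ≤ d, ⟨E*_{r+i}u, E_{t+j}v⟩ = u_i(θ_{t+j})·k_i(W)·k*_j(W)·⟨u,v⟩/ν(W). -/

import Mathlib

open Matrix
open scoped Classical

noncomputable section

/-- The full setup: a `Q`-polynomial distance-regular graph `Γ = (X,R)` of diameter `D ≥ 3`,
with adjacency matrix `A`, primitive idempotents `E_i`, eigenvalues `θ_i`,
Krein parameters `q^h_{ij}`, a fixed base vertex `x`, dual primitive idempotents `E*_i`,
dual adjacency matrix `A*` and dual eigenvalues `θ*_i`. -/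
structure TSetup (X : Type*) [Fintype X] [DecidableEq X] where
  G : SimpleGraph X
  hGconn : G.Connected
  D : ℕ
  hD3 : 3 ≤ D
  hDiamLe : ∀ y z : X, G.dist y z ≤ D
  hDiamEq : ∃ y z : X, G.dist y z = D
  p : ℕ → ℕ → ℕ → ℕ
  hDRG : ∀ h i j : ℕ, h ≤ D → i ≤ D → j ≤ D → ∀ y z : X, G.dist y z = h →
    Nat.card {w : X // G.dist y w = i ∧ G.dist z w = j} = p h i j
  A : Matrix X X ℂ
  hA : ∀ y z : X, A y z = if G.Adj y z then 1 else 0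
  E : ℕ → Matrix X X ℂ
  hEzero : ∀ i : ℕ, D < i → E i = 0
  hEsum : ∑ i ∈ Finset.range (D + 1), E i = 1
  hEidem : ∀ i j : ℕ, i ≤ D → j ≤ D → E i * E j = if i = j then E i else 0
  hEsymm : ∀ i : ℕ, (E i)ᵀ = E i
  hEreal : ∀ i : ℕ, (E i).map (starRingEnd ℂ) = E i
  hE0 : E 0 = (Fintype.card X : ℂ)⁻¹ • Matrix.of (fun _ _ => (1 : ℂ))
  θ : ℕ → ℝ
  hθinj : ∀ i j : ℕ, i ≤ D → j ≤ D → θ i = θ j → i = j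
  hAspec : A = ∑ i ∈ Finset.range (D + 1), (θ i : ℂ) • E i
  q : ℕ → ℕ → ℕ → ℝ
  hKrein : ∀ i j : ℕ, i ≤ D → j ≤ D →
    Matrix.hadamard (E i) (E j) =
      (Fintype.card X : ℂ)⁻¹ • ∑ h ∈ Finset.range (D + 1), (q h i j : ℂ) • E h
  hQpoly0 : ∀ h i j : ℕ, h ≤ D → i ≤ D → j ≤ D →
    (i + j < h ∨ h + j < i ∨ h + i < j) → q h i j = 0
  hQpoly1 : ∀ h i j : ℕ, h ≤ D → i ≤ D → j ≤ D →
    (h = i + j ∨ i = h + j ∨ j = h + i) → q h i j ≠ 0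
  x : X
  Estar : ℕ → Matrix X X ℂ
  hEstarzero : ∀ i : ℕ, D < i → Estar i = 0
  hEstar : ∀ i : ℕ, i ≤ D → ∀ y z : X,
    Estar i y z = if y = z ∧ G.dist x y = i then 1 else 0
  Astar : Matrix X X ℂ
  hAstar : ∀ y z : X, Astar y z = if y = z then (Fintype.card X : ℂ) * E 1 x y else 0
  θstar : ℕ → ℝ
  hθstarinj : ∀ i j : ℕ, i ≤ D → j ≤ D → θstar i = θstar j → i = j
  hAstarspec : Astar = ∑ i ∈ Finset.range (D + 1), (θstar i : ℂ) • Estar i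

variable {X : Type*} [Fintype X] [DecidableEq X]

/-- The Terwilliger algebra `T = T(x)`, generated by `A` and `A*`. -/
def TSetup.T (S : TSetup X) : Subalgebra ℂ (Matrix X X ℂ) :=
  Algebra.adjoin ℂ {S.A, S.Astar}

/-- A thin irreducible `T`-module `W` with endpoint `r`, dual endpoint `t` and diameter `d`,
where `E*_i W ≠ 0` iff `r ≤ i ≤ r + d` and `E_i W ≠ 0` iff `t ≤ i ≤ t + d`. -/
structure TMod (S : TSetup X) where
  W : Submodule ℂ (X → ℂ)
  hWinv : ∀ B ∈ S.T, ∀ w ∈ W, B *ᵥ w ∈ W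
  hWne : W ≠ ⊥
  hWirr : ∀ U : Submodule ℂ (X → ℂ), U ≤ W →
    (∀ B ∈ S.T, ∀ w ∈ U, B *ᵥ w ∈ U) → U = ⊥ ∨ U = W
  hthin : ∀ i : ℕ, Module.finrank ℂ (W.map (S.Estar i).mulVecLin) ≤ 1
  r : ℕ
  t : ℕ
  d : ℕ
  hr : ∀ i : ℕ, W.map (S.Estar i).mulVecLin ≠ ⊥ ↔ r ≤ i ∧ i ≤ r + d
  ht : ∀ i : ℕ, W.map (S.E i).mulVecLin ≠ ⊥ ↔ t ≤ i ∧ i ≤ t + d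

open Classical in
/-- The action of a matrix `B` on `W` (the restriction of `B` to `W`; defined to be `0`
if `B` does not leave `W` invariant). -/
def actW (S : TSetup X) (M : TMod S) (B : Matrix X X ℂ) : M.W →ₗ[ℂ] M.W :=
  if h : ∀ w ∈ M.W, B.mulVecLin w ∈ M.W then B.mulVecLin.restrict h else 0

/-- `tr_W(B)`: the trace of the action of `B` on `W`. -/
def trW (S : TSetup X) (M : TMod S) (B : Matrix X X ℂ) : ℂ :=
  LinearMap.trace ℂ M.W (actW S M B)

/-- `a_i(W) = tr_W(E*_{r+i} A)`. -/
def aW (S : TSetup X) (M : TMod S) (i : ℕ) : ℂ :=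
  trW S M (S.Estar (M.r + i) * S.A)

/-- `x_i(W) = tr_W(E*_{r+i} A E*_{r+i-1} A)`, with `x_0(W) = 0`. -/
def xW (S : TSetup X) (M : TMod S) (i : ℕ) : ℂ :=
  if i = 0 then 0 else trW S M (S.Estar (M.r + i) * S.A * S.Estar (M.r + i - 1) * S.A)

/-- `a*_i(W) = tr_W(E_{t+i} A*)`. -/
def astarW (S : TSetup X) (M : TMod S) (i : ℕ) : ℂ :=
  trW S M (S.E (M.t + i) * S.Astar)

/-- `x*_i(W) = tr_W(E_{t+i} A* E_{t+i-1} A*)`, with `x*_0(W) = 0`. -/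
def xstarW (S : TSetup X) (M : TMod S) (i : ℕ) : ℂ :=
  if i = 0 then 0 else trW S M (S.E (M.t + i) * S.Astar * S.E (M.t + i - 1) * S.Astar)

/-- The polynomials `p_i`: `p_0 = 1`, `p_{-1} = 0`,
`λ p_i = p_{i+1} + a_i(W) p_i + x_i(W) p_{i-1}`. -/
def pW (S : TSetup X) (M : TMod S) : ℕ → Polynomial ℂ
  | 0 => 1
  | 1 => Polynomial.X - Polynomial.C (aW S M 0)
  | (n + 2) =>
      (Polynomial.X - Polynomial.C (aW S M (n + 1))) * pW S M (n + 1)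
        - Polynomial.C (xW S M (n + 1)) * pW S M n

/-- The polynomials `p*_i`: `p*_0 = 1`, `p*_{-1} = 0`,
`λ p*_i = p*_{i+1} + a*_i(W) p*_i + x*_i(W) p*_{i-1}`. -/
def pstarW (S : TSetup X) (M : TMod S) : ℕ → Polynomial ℂ
  | 0 => 1
  | 1 => Polynomial.X - Polynomial.C (astarW S M 0)
  | (n + 2) =>
      (Polynomial.X - Polynomial.C (astarW S M (n + 1))) * pstarW S M (n + 1)
        - Polynomial.C (xstarW S M (n + 1)) * pstarW S M n

/-- The Hermitian inner product `⟨u,v⟩ = Σ_y u_y conj(v_y)` on `ℂ^X`. -/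
def herm (u v : X → ℂ) : ℂ := ∑ y, u y * (starRingEnd ℂ) (v y)

/-- `ν(W)`, the multiplicative inverse of `m_0(W) = tr_W(E_t E*_r)`. -/
def nuW (S : TSetup X) (M : TMod S) : ℂ :=
  (trW S M (S.E M.t * S.Estar M.r))⁻¹

/-- `k_i(W) = ν(W) m*_i(W)` where `m*_i(W) = tr_W(E*_{r+i} E_t)`. -/
def kW (S : TSetup X) (M : TMod S) (i : ℕ) : ℂ :=
  nuW S M * trW S M (S.Estar (M.r + i) * S.E M.t)

/-- `k*_i(W) = ν(W) m_i(W)` where `m_i(W) = tr_W(E_{t+i} E*_r)`. -/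
def kstarW (S : TSetup X) (M : TMod S) (i : ℕ) : ℂ :=
  nuW S M * trW S M (S.E (M.t + i) * S.Estar M.r)

/-!
Everything happens on `W`. Applying the `p_i` to `v` gives `p_i(A) v = E*_{r+i} A p_{i-1}(A) v`, by
induction: thinness turns `E*_{r+i} A` and `E*_{r+i-1} A E*_{r+i} A` into multiplication by their
traces `a_i` and `x_i`, and `A` is tridiagonal with respect to the `E*_{r+i}`. Irreducibility makes
`v_i = p_i(A) v` nonzero for `i ≤ d`, so `v_i` spans `E*_{r+i} W`. Since `E_j A = θ_j E_j`, we get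
`E_j v_i = p_i(θ_j) E_j v`, and this evaluates every inner product and every trace in the formula
in terms of `‖v_i‖²`, `‖v‖²`, `⟨E_j v, v⟩` and `⟨u, v⟩`.
-/

section RankOne

variable {K V : Type*} [Field K] [AddCommGroup V] [Module K V] [FiniteDimensional K V]

lemma le_span_singleton_of_finrank_le_one {p : Submodule K V} (hp : Module.finrank K p ≤ 1)
    {w : V} (hw : w ∈ p) (hw0 : w ≠ 0) : p ≤ K ∙ w :=
  (Submodule.eq_of_le_of_finrank_le ((Submodule.span_singleton_le_iff_mem w p).2 hw)
    (hp.trans (finrank_span_singleton hw0).ge)).ge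

lemma apply_eq_trace_smul_of_range_le_span_singleton {f : Module.End K V} {w : V}
    (hf : LinearMap.range f ≤ K ∙ w) : f w = LinearMap.trace K V f • w := by
  obtain rfl | hw := eq_or_ne w 0
  · simp
  let φ : V →ₗ[K] K := (LinearEquiv.coord K V w hw : _ →ₗ[K] K) ∘ₗ
    f.codRestrict (K ∙ w) fun z => hf ⟨z, rfl⟩
  have hφ : f = φ.smulRight w :=
    LinearMap.ext fun z => (LinearEquiv.coord_apply_smul K V w hw ⟨f z, hf ⟨z, rfl⟩⟩).symm
  rw [hφ, LinearMap.trace_smulRight, LinearMap.smulRight_apply]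

end RankOne

section Spectral

lemma mul_aeval_eq_eval_smul {K R : Type*} [CommSemiring K] [Semiring R] [Algebra K R] {e a : R}
    {c : K} (h : e * a = c • e) (p : Polynomial K) :
    e * Polynomial.aeval a p = p.eval c • e := by
  induction p using Polynomial.induction_on with
  | C b => simp [Algebra.algebraMap_eq_smul_one]
  | add p q hp hq => simp only [map_add, mul_add, Polynomial.eval_add, add_smul, hp, hq]
  | monomial n b ih =>
    rw [pow_succ, ← mul_assoc, map_mul, ← mul_assoc, ih, Polynomial.aeval_X, smul_mul_assoc, h,
      smul_smul, Polynomial.eval_mul_X]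

lemma apply_aeval_eq_eval_smul {K V : Type*} [CommSemiring K] [AddCommMonoid V] [Module K V]
    {E A : Module.End K V} {θ : K} (h : E * A = θ • E) (p : Polynomial K) (v : V) :
    E (Polynomial.aeval A p v) = p.eval θ • E v :=
  LinearMap.congr_fun (mul_aeval_eq_eval_smul h p) v

lemma form_aeval_right {K V : Type*} [CommSemiring K] [AddCommMonoid V] [Module K V]
    {I : K →+* K} {B : V →ₗ[K] V →ₛₗ[I] K} {E A : Module.End K V} {θ : K}
    (hEB : B.IsSelfAdjoint E) (hEA : E * A = θ • E) {u : V} (hu : E u = u) (p : Polynomial K)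
    (v : V) : B u (Polynomial.aeval A p v) = I (p.eval θ) * B u v := by
  calc B u (Polynomial.aeval A p v)
      = B u (E (Polynomial.aeval A p v)) := by rw [← hEB, hu]
    _ = I (p.eval θ) * B u v := by
      rw [apply_aeval_eq_eval_smul hEA, map_smulₛₗ, ← hEB, hu, smul_eq_mul]

lemma mul_sum_smul_of_orthogonalIdempotents {K R ι : Type*} [CommSemiring K] [Semiring R]
    [Algebra K R] [Fintype ι] {e : ι → R} (he : OrthogonalIdempotents e) (c : ι → K) (i : ι) :
    e i * ∑ j, c j • e j = c i • e i := by
  classical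
  simp [Finset.mul_sum, he.mul_eq]

lemma mem_adjoin_of_completeOrthogonalIdempotents {K R ι : Type*} [Field K] [Ring R] [Algebra K R]
    [Fintype ι] {e : ι → R} (he : CompleteOrthogonalIdempotents e) {c : ι → K}
    (hc : Function.Injective c) (i : ι) : e i ∈ Algebra.adjoin K {∑ j, c j • e j} := by
  classical
  have hL : e i = Polynomial.aeval (∑ j, c j • e j) (Lagrange.basis Finset.univ c i) := by
    rw [← one_mul (Polynomial.aeval _ _), ← he.complete, Finset.sum_mul,
      Finset.sum_eq_single_of_mem i (Finset.mem_univ i) fun j _ hj => ?_,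
      mul_aeval_eq_eval_smul (mul_sum_smul_of_orthogonalIdempotents he.1 c i),
      Lagrange.eval_basis_self hc.injOn (Finset.mem_univ i), one_smul]
    rw [mul_aeval_eq_eval_smul (mul_sum_smul_of_orthogonalIdempotents he.1 c j),
      Lagrange.eval_basis_of_ne hj.symm (Finset.mem_univ j), zero_smul]
  rw [hL]
  exact Polynomial.aeval_mem_adjoin_singleton K _

lemma mulVec_mem_of_mem_adjoin {K n : Type*} [CommSemiring K] [Fintype n] [DecidableEq n]
    {s : Set (Matrix n n K)} {U : Submodule K (n → K)} (hU : ∀ B ∈ s, ∀ w ∈ U, B *ᵥ w ∈ U)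
    {B : Matrix n n K} (hB : B ∈ Algebra.adjoin K s) : ∀ w ∈ U, B *ᵥ w ∈ U := by
  induction hB using Algebra.adjoin_induction with
  | mem B hB => exact hU B hB
  | algebraMap c =>
    intro w hw
    rw [Algebra.algebraMap_eq_smul_one, smul_mulVec, one_mulVec]
    exact U.smul_mem c hw
  | add B C _ _ hB hC =>
    intro w hw
    rw [add_mulVec]
    exact add_mem (hB w hw) (hC w hw)
  | mul B C _ _ hB hC =>
    intro w hw
    rw [← mulVec_mulVec]
    exact hB _ (hC w hw)

end Spectral

section ThinTridiagonal

variable {K V : Type*} [Field K] [AddCommGroup V] [Module K V] {I : K →+* K}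

/-- `A` acts tridiagonally with respect to the lines `range (F k)`, where the `F k` are
idempotents self-adjoint for `B`. It abstracts the action of the adjacency matrix and of
the `E*_{r+k}` on a thin module; `F k` may vanish, as it does there for `k > d`. -/
structure IsThinTridiagonal (B : V →ₗ[K] V →ₛₗ[I] K) (A : Module.End K V)
    (F : ℕ → Module.End K V) : Prop where
  isSelfAdjoint (k : ℕ) : B.IsSelfAdjoint (F k)
  isIdempotentElem (k : ℕ) : IsIdempotentElem (F k)
  finrank_range_le_one (k : ℕ) : Module.finrank K (LinearMap.range (F k)) ≤ 1
  mul_zero : A * F 0 = F 0 * A * F 0 + F 1 * A * F 0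
  mul_succ (k : ℕ) : A * F (k + 1) =
    F k * A * F (k + 1) + F (k + 1) * A * F (k + 1) + F (k + 2) * A * F (k + 1)

/-- The polynomials `p_i` of a thin module, with the coefficients `a_i` and `x_i` written as
traces. -/
def tracePoly (A : Module.End K V) (F : ℕ → Module.End K V) : ℕ → Polynomial K
  | 0 => 1
  | 1 => Polynomial.X - Polynomial.C (LinearMap.trace K V (F 0 * A))
  | n + 2 =>
      (Polynomial.X - Polynomial.C (LinearMap.trace K V (F (n + 1) * A))) * tracePoly A F (n + 1)
        - Polynomial.C (LinearMap.trace K V (F (n + 1) * A * F n * A)) * tracePoly A F n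

namespace IsThinTridiagonal

variable [FiniteDimensional K V] {B : V →ₗ[K] V →ₛₗ[I] K} {A : Module.End K V}
  {F : ℕ → Module.End K V}

lemma range_le_span_singleton (h : IsThinTridiagonal B A F) {k : ℕ} {w : V} (hw : F k w = w)
    (hw0 : w ≠ 0) : LinearMap.range (F k) ≤ K ∙ w :=
  le_span_singleton_of_finrank_le_one (h.finrank_range_le_one k) ⟨w, hw⟩ hw0

lemma apply_apply_eq_trace_smul (h : IsThinTridiagonal B A F) {k : ℕ} {w : V} (hw : F k w = w)
    (C : Module.End K V) : F k (C w) = LinearMap.trace K V (F k * C) • w := by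
  obtain rfl | hw0 := eq_or_ne w 0
  · simp
  · exact apply_eq_trace_smul_of_range_le_span_singleton
      ((LinearMap.range_comp_le_range C (F k)).trans (h.range_le_span_singleton hw hw0))

lemma trace_mul_mul_form_self (h : IsThinTridiagonal B A F) {k : ℕ} {w : V} (hw : F k w = w)
    (C : Module.End K V) : LinearMap.trace K V (F k * C) * B w w = B (C w) w := by
  calc LinearMap.trace K V (F k * C) * B w w
      = B (F k (C w)) w := by simp [h.apply_apply_eq_trace_smul hw]
    _ = B (C w) w := by rw [h.isSelfAdjoint k, hw]

lemma form_self_smul_apply (h : IsThinTridiagonal B A F) {k : ℕ} {w : V} (hw : F k w = w)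
    (hw0 : w ≠ 0) (u : V) : B w w • F k u = B u w • w := by
  obtain ⟨c, hc⟩ := Submodule.mem_span_singleton.1 (h.range_le_span_singleton hw hw0 ⟨u, rfl⟩)
  have hcB : B u w = c * B w w := by
    calc B u w = B (F k u) w := by rw [h.isSelfAdjoint k, hw]
      _ = c * B w w := by simp [← hc]
  rw [hcB, ← hc, smul_smul, mul_comm]

lemma apply_aeval_tracePoly_and_succ (h : IsThinTridiagonal B A F) {v : V} (hv : F 0 v = v)
    (k : ℕ) :
    F k (Polynomial.aeval A (tracePoly A F k) v) = Polynomial.aeval A (tracePoly A F k) v ∧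
      Polynomial.aeval A (tracePoly A F (k + 1)) v =
        F (k + 1) (A (Polynomial.aeval A (tracePoly A F k) v)) := by
  induction k with
  | zero =>
    have hA : A v = F 0 (A v) + F 1 (A v) := by
      simpa [hv] using LinearMap.congr_fun h.mul_zero v
    refine ⟨by simpa [tracePoly], ?_⟩
    rw [h.apply_apply_eq_trace_smul hv] at hA
    simp [tracePoly, sub_eq_iff_eq_add', ← hA]
  | succ n ih =>
    obtain ⟨hn, hsucc⟩ := ih
    set w := Polynomial.aeval A (tracePoly A F n) v
    set w' := Polynomial.aeval A (tracePoly A F (n + 1)) v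
    have hn' : F (n + 1) w' = w' := by
      rw [hsucc]
      exact LinearMap.congr_fun (h.isIdempotentElem (n + 1)) _
    have hA : A w' = F n (A w') + F (n + 1) (A w') + F (n + 2) (A w') := by
      simpa [hn'] using LinearMap.congr_fun (h.mul_succ n) w'
    have hx : F n (A w') = LinearMap.trace K V (F (n + 1) * A * F n * A) • w := by
      rw [mul_assoc _ (F n), LinearMap.trace_mul_comm, mul_assoc, ← h.apply_apply_eq_trace_smul hn,
        hsucc]
      rfl
    rw [hx, h.apply_apply_eq_trace_smul hn'] at hA
    refine ⟨hn', ?_⟩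
    calc Polynomial.aeval A (tracePoly A F (n + 1 + 1)) v
        = A w' - LinearMap.trace K V (F (n + 1) * A) • w'
            - LinearMap.trace K V (F (n + 1) * A * F n * A) • w := by
          simp [tracePoly, sub_mul, w, w']
      _ = F (n + 2) (A w') := by
          rw [sub_sub, sub_eq_iff_eq_add', add_comm (_ • w')]
          exact hA

lemma apply_aeval_tracePoly (h : IsThinTridiagonal B A F) {v : V} (hv : F 0 v = v) (k : ℕ) :
    F k (Polynomial.aeval A (tracePoly A F k) v) = Polynomial.aeval A (tracePoly A F k) v :=
  (h.apply_aeval_tracePoly_and_succ hv k).1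

lemma aeval_tracePoly_succ (h : IsThinTridiagonal B A F) {v : V} (hv : F 0 v = v) (k : ℕ) :
    Polynomial.aeval A (tracePoly A F (k + 1)) v =
      F (k + 1) (A (Polynomial.aeval A (tracePoly A F k) v)) :=
  (h.apply_aeval_tracePoly_and_succ hv k).2

lemma aeval_tracePoly_ne_zero (h : IsThinTridiagonal B A F) {v : V} (hv : F 0 v = v)
    (hv0 : v ≠ 0) {i : ℕ} (hi : ∀ k < i, F (k + 1) * A * F k ≠ 0) :
    Polynomial.aeval A (tracePoly A F i) v ≠ 0 := by
  induction i with
  | zero => simpa [tracePoly]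
  | succ k ih =>
    intro hzero
    rw [h.aeval_tracePoly_succ hv] at hzero
    refine hi k k.lt_succ_self (LinearMap.ext fun z => ?_)
    obtain ⟨c, hc⟩ := Submodule.mem_span_singleton.1 <| h.range_le_span_singleton
      (h.apply_aeval_tracePoly hv k) (ih fun l hl => hi l (hl.trans k.lt_succ_self)) ⟨z, rfl⟩
    simp [← hc, hzero]

variable {E E' : Module.End K V} {θ θ' : K}

lemma trace_mul_mul_form_aeval_tracePoly (h : IsThinTridiagonal B A F) (hE : IsIdempotentElem E)
    (hEB : B.IsSelfAdjoint E) (hEA : E * A = θ • E) {v : V} (hv : F 0 v = v) (i : ℕ) :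
    LinearMap.trace K V (F i * E) *
        B (Polynomial.aeval A (tracePoly A F i) v) (Polynomial.aeval A (tracePoly A F i) v) =
      (tracePoly A F i).eval θ * I ((tracePoly A F i).eval θ) * B (E v) v := by
  have hEv : E (E v) = E v := LinearMap.congr_fun hE v
  rw [h.trace_mul_mul_form_self (h.apply_aeval_tracePoly hv i), apply_aeval_eq_eval_smul hEA,
    map_smul, LinearMap.smul_apply, form_aeval_right hEB hEA hEv, smul_eq_mul, mul_assoc]

lemma form_aeval_tracePoly_mul_form_apply (h : IsThinTridiagonal B A F)
    (hEB : B.IsSelfAdjoint E) (hEA : E * A = θ • E)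
    (hEB' : B.IsSelfAdjoint E') (hEA' : E' * A = θ' • E') {u v : V} (hu : E u = u)
    (hv : F 0 v = v) {i : ℕ} (hi : Polynomial.aeval A (tracePoly A F i) v ≠ 0) :
    B (Polynomial.aeval A (tracePoly A F i) v) (Polynomial.aeval A (tracePoly A F i) v) *
        B (F i u) (E' v) =
      I ((tracePoly A F i).eval θ) * (tracePoly A F i).eval θ' * B u v * B (E' v) v := by
  set w := Polynomial.aeval A (tracePoly A F i) v
  calc B w w * B (F i u) (E' v)
      = B (B w w • F i u) (E' v) := by rw [map_smul, LinearMap.smul_apply, smul_eq_mul]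
    _ = B u w * B (E' w) v := by
      rw [h.form_self_smul_apply (h.apply_aeval_tracePoly hv i) hi, map_smul,
        LinearMap.smul_apply, ← hEB', smul_eq_mul]
    _ = _ := by
      rw [form_aeval_right hEB hEA hu, apply_aeval_eq_eval_smul hEA', map_smul,
        LinearMap.smul_apply, smul_eq_mul]
      ring

end IsThinTridiagonal

theorem stmt15_general [FiniteDimensional K V] {B : V →ₗ[K] V →ₛₗ[I] K}
    (hB : ∀ w, B w w = 0 → w = 0) {A : Module.End K V} {F : ℕ → Module.End K V}
    (h : IsThinTridiagonal B A F) {E E' : Module.End K V} {θ θ' : K}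
    (hE : IsIdempotentElem E) (hEB : B.IsSelfAdjoint E) (hEA : E * A = θ • E)
    (hEB' : B.IsSelfAdjoint E') (hEA' : E' * A = θ' • E')
    {u v : V} (hu : E u = u) (hv : F 0 v = v) (hv0 : v ≠ 0)
    {i : ℕ} (hi : ∀ k < i, F (k + 1) * A * F k ≠ 0) :
    B (F i u) (E' v) = (tracePoly A F i).eval θ' / (tracePoly A F i).eval θ *
      (LinearMap.trace K V (F i * E) * LinearMap.trace K V (E' * F 0) /
        LinearMap.trace K V (E * F 0)) * B u v := by
  have hw0 := h.aeval_tracePoly_ne_zero hv hv0 hi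
  have hlhs := h.form_aeval_tracePoly_mul_form_apply hEB hEA hEB' hEA' hu hv hw0
  have hFE := h.trace_mul_mul_form_aeval_tracePoly hE hEB hEA hv i
  have hww := mt (hB _) hw0
  have htrace (C : Module.End K V) : B (C v) v = LinearMap.trace K V (C * F 0) * B v v := by
    rw [LinearMap.trace_mul_comm, h.trace_mul_mul_form_self hv]
  -- If a denominator vanishes, then so do both sides.
  obtain hP | hP := eq_or_ne ((tracePoly A F i).eval θ) 0
  · simpa [hP, hww] using hlhs
  obtain hm | hm := eq_or_ne (LinearMap.trace K V (E * F 0)) 0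
  · have hEv : E v = 0 := hB _ <| by
      rw [← hEB, ← Module.End.mul_apply, hE.eq, htrace, hm, zero_mul]
    have huv : B u v = 0 := by rw [← hu, hEB, hEv, map_zero]
    simpa [huv, hww] using hlhs
  refine mul_left_cancel₀ hww ?_
  rw [hlhs, htrace]
  rw [htrace] at hFE
  field_simp
  linear_combination -(tracePoly A F i).eval θ' * LinearMap.trace K V (E' * F 0) * B u v * hFE

end ThinTridiagonal

section Herm

/-- The inner product `herm` bundled as a sesquilinear form, so that operators on `W` can be
self-adjoint for its restriction. -/
def hermForm : (X → ℂ) →ₗ[ℂ] (X → ℂ) →ₗ⋆[ℂ] ℂ :=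
  LinearMap.mk₂'ₛₗ (RingHom.id ℂ) (starRingEnd ℂ) herm
    (fun a b c => add_dotProduct a b (star c))
    (fun c a b => smul_dotProduct c a (star b))
    (fun a b c => (congrArg (a ⬝ᵥ ·) (star_add b c)).trans (dotProduct_add a (star b) (star c)))
    (fun c a b => (congrArg (a ⬝ᵥ ·) (star_smul c b)).trans (dotProduct_smul (star c) a (star b)))

omit [DecidableEq X] in
lemma hermForm_apply (a b : X → ℂ) : hermForm a b = herm a b := rfl

open scoped ComplexOrder in
omit [DecidableEq X] in
lemma eq_zero_of_herm_self_eq_zero {w : X → ℂ} (hw : herm w w = 0) : w = 0 :=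
  dotProduct_self_star_eq_zero.1 hw

omit [DecidableEq X] in
lemma herm_mulVec_left_of_isHermitian {B : Matrix X X ℂ} (hB : B.IsHermitian) (a b : X → ℂ) :
    herm (B *ᵥ a) b = herm a (B *ᵥ b) := by
  change (B *ᵥ a) ⬝ᵥ star b = a ⬝ᵥ star (B *ᵥ b)
  rw [star_mulVec, hB.eq, dotProduct_comm, dotProduct_mulVec, dotProduct_comm]

end Herm

namespace TSetup

variable (S : TSetup X)

lemma Estar_eq_diagonal (k : ℕ) :
    S.Estar k = diagonal fun y => if S.G.dist S.x y = k then 1 else 0 := by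
  ext y z
  rw [diagonal_apply, ← ite_and]
  obtain hk | hk := le_or_gt k S.D
  · exact S.hEstar k hk y z
  · have hy : S.G.dist S.x y ≠ k := ((S.hDiamLe S.x y).trans_lt hk).ne
    simp [S.hEstarzero k hk, hy]

lemma isHermitian_Estar (k : ℕ) : (S.Estar k).IsHermitian := by
  rw [Estar_eq_diagonal]
  exact isHermitian_diagonal_of_self_adjoint _ (funext fun y => by simp [apply_ite])

lemma Estar_mul_Estar (m n : ℕ) : S.Estar m * S.Estar n = if m = n then S.Estar m else 0 := by
  obtain rfl | hmn := eq_or_ne m n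
  · simp [Estar_eq_diagonal]
  · simp only [Estar_eq_diagonal, diagonal_mul_diagonal, hmn, if_false, diagonal_eq_zero]
    ext y
    simp only [mul_ite, mul_one, mul_zero, Pi.zero_apply]
    split_ifs <;> grind

lemma isIdempotentElem_Estar (k : ℕ) : IsIdempotentElem (S.Estar k) := by
  rw [IsIdempotentElem, Estar_mul_Estar, if_pos rfl]

lemma sum_range_Estar : ∑ k ∈ Finset.range (S.D + 1), S.Estar k = 1 := by
  ext y z
  obtain rfl | hyz := eq_or_ne y z
  · simp [Matrix.sum_apply, Estar_eq_diagonal, S.hDiamLe S.x y]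
  · simp [Matrix.sum_apply, Estar_eq_diagonal, hyz]

lemma completeOrthogonalIdempotents_Estar :
    CompleteOrthogonalIdempotents fun k : Fin (S.D + 1) => S.Estar k where
  idem k := S.isIdempotentElem_Estar k
  ortho k l hkl := by simp [Estar_mul_Estar, Fin.val_ne_of_ne hkl]
  complete := by rw [← Finset.sum_range, sum_range_Estar]

lemma isHermitian_E (m : ℕ) : (S.E m).IsHermitian := by
  rw [IsHermitian, conjTranspose, S.hEsymm]
  exact S.hEreal m

lemma isIdempotentElem_E (m : ℕ) : IsIdempotentElem (S.E m) := by
  obtain hm | hm := le_or_gt m S.D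
  · simp [IsIdempotentElem, S.hEidem m m hm hm]
  · simp [IsIdempotentElem, S.hEzero m hm]

lemma completeOrthogonalIdempotents_E :
    CompleteOrthogonalIdempotents fun k : Fin (S.D + 1) => S.E k where
  idem k := S.isIdempotentElem_E k
  ortho k l hkl := by simp [S.hEidem k l k.is_le l.is_le, Fin.val_ne_of_ne hkl]
  complete := by rw [← Finset.sum_range, S.hEsum]

lemma E_mul_A (m : ℕ) : S.E m * S.A = (S.θ m : ℂ) • S.E m := by
  obtain hm | hm := le_or_gt m S.D
  · rw [S.hAspec, Finset.sum_range]
    exact mul_sum_smul_of_orthogonalIdempotents S.completeOrthogonalIdempotents_E.1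
      (fun k : Fin (S.D + 1) => (S.θ k : ℂ)) ⟨m, Nat.lt_succ_of_le hm⟩
  · simp [S.hEzero m hm]

lemma Estar_mul_Astar (m : ℕ) : S.Estar m * S.Astar = (S.θstar m : ℂ) • S.Estar m := by
  obtain hm | hm := le_or_gt m S.D
  · rw [S.hAstarspec, Finset.sum_range]
    exact mul_sum_smul_of_orthogonalIdempotents S.completeOrthogonalIdempotents_Estar.1
      (fun k : Fin (S.D + 1) => (S.θstar k : ℂ)) ⟨m, Nat.lt_succ_of_le hm⟩
  · simp [S.hEstarzero m hm]

lemma A_mem_T : S.A ∈ S.T := Algebra.subset_adjoin (by simp)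

lemma Astar_mem_T : S.Astar ∈ S.T := Algebra.subset_adjoin (by simp)

lemma E_mem_T (m : ℕ) : S.E m ∈ S.T := by
  obtain hm | hm := le_or_gt m S.D
  · have hθ : Function.Injective fun k : Fin (S.D + 1) => (S.θ k : ℂ) := fun k l hkl =>
      Fin.ext (S.hθinj k l k.is_le l.is_le (Complex.ofReal_injective hkl))
    have hmem := mem_adjoin_of_completeOrthogonalIdempotents S.completeOrthogonalIdempotents_E hθ
      ⟨m, Nat.lt_succ_of_le hm⟩
    rw [← Finset.sum_range fun k => (S.θ k : ℂ) • S.E k, ← S.hAspec] at hmem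
    exact Algebra.adjoin_mono (by simp) hmem
  · rw [S.hEzero m hm]
    exact zero_mem _

lemma Estar_mem_T (m : ℕ) : S.Estar m ∈ S.T := by
  obtain hm | hm := le_or_gt m S.D
  · have hθstar : Function.Injective fun k : Fin (S.D + 1) => (S.θstar k : ℂ) := fun k l hkl =>
      Fin.ext (S.hθstarinj k l k.is_le l.is_le (Complex.ofReal_injective hkl))
    have hmem := mem_adjoin_of_completeOrthogonalIdempotents
      S.completeOrthogonalIdempotents_Estar hθstar ⟨m, Nat.lt_succ_of_le hm⟩
    rw [← Finset.sum_range fun k => (S.θstar k : ℂ) • S.Estar k, ← S.hAstarspec] at hmem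
    exact Algebra.adjoin_mono (by simp) hmem
  · rw [S.hEstarzero m hm]
    exact zero_mem _

lemma A_mul_Estar_zero :
    S.A * S.Estar 0 = S.Estar 0 * S.A * S.Estar 0 + S.Estar 1 * S.A * S.Estar 0 := by
  ext y z
  have hdist (hyz : S.G.Adj y z) := hyz.symm.diff_dist_adj (u := S.x)
  simp only [Estar_eq_diagonal, mul_diagonal, diagonal_mul, Matrix.add_apply, S.hA]
  grind

lemma A_mul_Estar_succ (k : ℕ) :
    S.A * S.Estar (k + 1) = S.Estar k * S.A * S.Estar (k + 1) +
      S.Estar (k + 1) * S.A * S.Estar (k + 1) + S.Estar (k + 2) * S.A * S.Estar (k + 1) := by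
  ext y z
  have hdist (hyz : S.G.Adj y z) := hyz.symm.diff_dist_adj (u := S.x)
  simp only [Estar_eq_diagonal, mul_diagonal, diagonal_mul, Matrix.add_apply, S.hA]
  grind

lemma Estar_mul_A_mul_Estar_eq_zero {m n : ℕ} (hmn : n + 1 < m) :
    S.Estar m * S.A * S.Estar n = 0 := by
  ext y z
  have hdist (hyz : S.G.Adj y z) := hyz.symm.diff_dist_adj (u := S.x)
  simp only [Estar_eq_diagonal, mul_diagonal, diagonal_mul, Matrix.zero_apply, S.hA]
  grind

end TSetup

section Action

variable {S : TSetup X} {M : TMod S}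

lemma coe_actW {B : Matrix X X ℂ} (hB : B ∈ S.T) (w : M.W) :
    (actW S M B w : X → ℂ) = B *ᵥ w := by
  have h : ∀ z ∈ M.W, B.mulVecLin z ∈ M.W := M.hWinv B hB
  rw [actW, dif_pos h]
  rfl

lemma actW_mul {B C : Matrix X X ℂ} (hB : B ∈ S.T) (hC : C ∈ S.T) :
    actW S M (B * C) = actW S M B * actW S M C := by
  ext w : 2
  simp only [Module.End.mul_apply, coe_actW hB, coe_actW hC, coe_actW (mul_mem hB hC),
    mulVec_mulVec]

lemma actW_smul {B : Matrix X X ℂ} (hB : B ∈ S.T) (c : ℂ) :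
    actW S M (c • B) = c • actW S M B := by
  ext w : 2
  simp [coe_actW hB, coe_actW (S.T.smul_mem hB c), smul_mulVec]

lemma isIdempotentElem_actW {B : Matrix X X ℂ} (hB : B ∈ S.T) (hBB : IsIdempotentElem B) :
    IsIdempotentElem (actW S M B) := by
  rw [IsIdempotentElem, ← actW_mul hB hB, hBB.eq]

lemma actW_E_mul_actW_A (m : ℕ) :
    actW S M (S.E m) * actW S M S.A = (S.θ m : ℂ) • actW S M (S.E m) := by
  rw [← actW_mul (S.E_mem_T m) S.A_mem_T, S.E_mul_A, actW_smul (S.E_mem_T m)]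

lemma trW_mul {B C : Matrix X X ℂ} (hB : B ∈ S.T) (hC : C ∈ S.T) :
    trW S M (B * C) = LinearMap.trace ℂ M.W (actW S M B * actW S M C) := by
  rw [trW, actW_mul hB hC]

lemma isSelfAdjoint_actW {B : Matrix X X ℂ} (hB : B ∈ S.T) (hBH : B.IsHermitian) :
    (hermForm.domRestrict₁₂ M.W M.W).IsSelfAdjoint (actW S M B) := fun a b => by
  rw [LinearMap.domRestrict₁₂_apply, LinearMap.domRestrict₁₂_apply, hermForm_apply, hermForm_apply,
    coe_actW hB, coe_actW hB, herm_mulVec_left_of_isHermitian hBH]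

lemma exists_coe_eq_and_actW_eq {B : Matrix X X ℂ} (hB : B ∈ S.T) (hBB : IsIdempotentElem B)
    {u : X → ℂ} (hu : u ∈ M.W.map B.mulVecLin) : ∃ u' : M.W, ↑u' = u ∧ actW S M B u' = u' := by
  obtain ⟨w, hw, rfl⟩ := hu
  refine ⟨actW S M B ⟨w, hw⟩, coe_actW hB _, ?_⟩
  rw [← Module.End.mul_apply, (isIdempotentElem_actW hB hBB).eq]

end Action

namespace TMod

variable {S : TSetup X} (M : TMod S)

/-- The action of `E*_{r+k}` on `W`: the projections with respect to which `A` is tridiagonal,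
indexed from the endpoint, so that they vanish for `k > d`. -/
def dualProj (k : ℕ) : Module.End ℂ M.W := actW S M (S.Estar (M.r + k))

lemma Estar_mulVec_eq_zero {m : ℕ} (hm : ¬(M.r ≤ m ∧ m ≤ M.r + M.d)) {w : X → ℂ} (hw : w ∈ M.W) :
    S.Estar m *ᵥ w = 0 := by
  have hbot : M.W.map (S.Estar m).mulVecLin = ⊥ := not_not.1 (mt (M.hr m).1 hm)
  exact (Submodule.mem_bot ℂ).1 (hbot ▸ Submodule.mem_map_of_mem hw)

lemma finrank_range_dualProj_le_one (k : ℕ) :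
    Module.finrank ℂ (LinearMap.range (M.dualProj k)) ≤ 1 := by
  have hmap : (LinearMap.range (M.dualProj k)).map M.W.subtype =
      M.W.map (S.Estar (M.r + k)).mulVecLin := by
    rw [← LinearMap.range_comp, ← LinearMap.range_domRestrict]
    exact congrArg LinearMap.range (LinearMap.ext fun w => coe_actW (S.Estar_mem_T _) w)
  rw [← Submodule.finrank_map_subtype_eq, hmap]
  exact M.hthin _

lemma actW_A_mul_dualProj_zero : actW S M S.A * M.dualProj 0 =
    M.dualProj 0 * actW S M S.A * M.dualProj 0 + M.dualProj 1 * actW S M S.A * M.dualProj 0 := by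
  ext w : 2
  obtain hr | ⟨s, hr⟩ : M.r = 0 ∨ ∃ s, M.r = s + 1 := by cases M.r <;> simp
  · simpa [dualProj, coe_actW, S.A_mem_T, S.Estar_mem_T, hr, add_mulVec, mul_assoc] using
      congrArg (· *ᵥ (w : X → ℂ)) S.A_mul_Estar_zero
  · have hs : (S.Estar s * S.A * S.Estar (s + 1)) *ᵥ (w : X → ℂ) = 0 := by
      rw [mul_assoc, ← mulVec_mulVec]
      exact M.Estar_mulVec_eq_zero (by omega)
        (M.hWinv _ (mul_mem S.A_mem_T (S.Estar_mem_T _)) w w.2)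
    simpa [dualProj, coe_actW, S.A_mem_T, S.Estar_mem_T, hr, add_mulVec, ← mul_assoc, hs] using
      congrArg (· *ᵥ (w : X → ℂ)) (S.A_mul_Estar_succ s)

lemma isThinTridiagonal :
    IsThinTridiagonal (hermForm.domRestrict₁₂ M.W M.W) (actW S M S.A) M.dualProj where
  isSelfAdjoint k := isSelfAdjoint_actW (S.Estar_mem_T _) (S.isHermitian_Estar _)
  isIdempotentElem k := isIdempotentElem_actW (S.Estar_mem_T _) (S.isIdempotentElem_Estar _)
  finrank_range_le_one := M.finrank_range_dualProj_le_one
  mul_zero := M.actW_A_mul_dualProj_zero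
  mul_succ k := by
    ext w : 2
    simpa [dualProj, coe_actW, S.A_mem_T, S.Estar_mem_T, add_assoc, add_mulVec, mul_assoc] using
      congrArg (· *ᵥ (w : X → ℂ)) (S.A_mul_Estar_succ (M.r + k))

lemma eq_bot_or_eq_of_mulVec_mem {U : Submodule ℂ (X → ℂ)} (hU : U ≤ M.W)
    (hA : ∀ w ∈ U, S.A *ᵥ w ∈ U) (hAstar : ∀ w ∈ U, S.Astar *ᵥ w ∈ U) : U = ⊥ ∨ U = M.W :=
  M.hWirr U hU fun _ hB => mulVec_mem_of_mem_adjoin (by simpa using ⟨hA, hAstar⟩) hB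

lemma Estar_mulVec_A_mulVec_eq_zero {k : ℕ}
    (hzero : M.dualProj (k + 1) * actW S M S.A * M.dualProj k = 0) {w : X → ℂ} (hw : w ∈ M.W)
    (hwk : ∀ m > M.r + k, S.Estar m *ᵥ w = 0) {m : ℕ} (hm : M.r + k < m) :
    S.Estar m *ᵥ (S.A *ᵥ w) = 0 := by
  have hstep : (S.Estar (M.r + (k + 1)) * S.A * S.Estar (M.r + k)) *ᵥ w = 0 := by
    simpa [dualProj, coe_actW, S.A_mem_T, S.Estar_mem_T, ← mul_assoc] using
      congrArg Subtype.val (LinearMap.congr_fun hzero ⟨w, hw⟩)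
  have hterm (n : ℕ) : (S.Estar m * S.A * S.Estar n) *ᵥ w = 0 := by
    obtain hn | hn := lt_or_ge (M.r + k) n
    · rw [← mulVec_mulVec, hwk n hn, mulVec_zero]
    obtain hmn | hmn := lt_or_ge (n + 1) m
    · rw [S.Estar_mul_A_mul_Estar_eq_zero hmn, zero_mulVec]
    obtain rfl : n = M.r + k := by omega
    obtain rfl : m = M.r + (k + 1) := by omega
    exact hstep
  rw [mulVec_mulVec, ← mul_one (_ * _), ← S.sum_range_Estar, Finset.mul_sum, sum_mulVec]
  exact Finset.sum_eq_zero fun n _ => hterm n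

lemma dualProj_succ_mul_actW_A_mul_dualProj_ne_zero {k : ℕ} (hk : k < M.d) :
    M.dualProj (k + 1) * actW S M S.A * M.dualProj k ≠ 0 := by
  intro hzero
  -- Otherwise the vectors of `W` supported within distance `r + k` form a proper submodule.
  let U : Submodule ℂ (X → ℂ) := M.W ⊓ ⨅ m > M.r + k, LinearMap.ker (S.Estar m).mulVecLin
  have mem_U {w : X → ℂ} : w ∈ U ↔ w ∈ M.W ∧ ∀ m > M.r + k, S.Estar m *ᵥ w = 0 := by
    simp [U, Submodule.mem_iInf]
  have hUA (w) (hw : w ∈ U) : S.A *ᵥ w ∈ U := by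
    rw [mem_U] at hw ⊢
    exact ⟨M.hWinv _ S.A_mem_T w hw.1,
      fun m hm => M.Estar_mulVec_A_mulVec_eq_zero hzero hw.1 hw.2 hm⟩
  have hUAstar (w) (hw : w ∈ U) : S.Astar *ᵥ w ∈ U := by
    rw [mem_U] at hw ⊢
    refine ⟨M.hWinv _ S.Astar_mem_T w hw.1, fun m hm => ?_⟩
    rw [mulVec_mulVec, S.Estar_mul_Astar, smul_mulVec, hw.2 m hm, smul_zero]
  obtain hU | hU := M.eq_bot_or_eq_of_mulVec_mem inf_le_left hUA hUAstar
  · refine (M.hr M.r).2 ⟨le_rfl, M.r.le_add_right M.d⟩ (eq_bot_iff.2 ?_)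
    rintro _ ⟨w, hw, rfl⟩
    rw [← hU]
    refine mem_U.2 ⟨M.hWinv _ (S.Estar_mem_T _) w hw, fun m hm => ?_⟩
    have hrm : m ≠ M.r := by omega
    rw [mulVecLin_apply, mulVec_mulVec, S.Estar_mul_Estar, if_neg hrm, zero_mulVec]
  · refine (M.hr (M.r + (k + 1))).2 (by omega) (eq_bot_iff.2 ?_)
    rintro _ ⟨w, hw, rfl⟩
    exact (mem_U.1 (hU.ge hw)).2 _ (by omega)

lemma pW_eq_tracePoly : ∀ i, pW S M i = tracePoly (actW S M S.A) M.dualProj i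
  | 0 => rfl
  | 1 => by rw [pW, tracePoly, aW, trW_mul (S.Estar_mem_T _) S.A_mem_T, dualProj]
  | n + 2 => by
    have ha : aW S M (n + 1) = LinearMap.trace ℂ M.W (M.dualProj (n + 1) * actW S M S.A) :=
      trW_mul (S.Estar_mem_T _) S.A_mem_T
    have hx : xW S M (n + 1) = LinearMap.trace ℂ M.W
        (M.dualProj (n + 1) * actW S M S.A * M.dualProj n * actW S M S.A) := by
      have hF (k : ℕ) := S.Estar_mem_T (M.r + k)
      have hFA := mul_mem (hF (n + 1)) S.A_mem_T
      rw [dualProj, dualProj, ← actW_mul (hF _) S.A_mem_T, ← actW_mul hFA (hF n)]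
      exact trW_mul (mul_mem hFA (hF n)) S.A_mem_T
    rw [pW, tracePoly, pW_eq_tracePoly n, pW_eq_tracePoly (n + 1), ha, hx]

lemma kW_mul_kstarW_div_nuW (i j : ℕ) : kW S M i * kstarW S M j / nuW S M =
    LinearMap.trace ℂ M.W (M.dualProj i * actW S M (S.E M.t)) *
      LinearMap.trace ℂ M.W (actW S M (S.E (M.t + j)) * M.dualProj 0) /
      LinearMap.trace ℂ M.W (actW S M (S.E M.t) * M.dualProj 0) := by
  have hEF (m k : ℕ) : LinearMap.trace ℂ M.W (actW S M (S.E m) * M.dualProj k) =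
      trW S M (S.E m * S.Estar (M.r + k)) := (trW_mul (S.E_mem_T m) (S.Estar_mem_T _)).symm
  rw [LinearMap.trace_mul_comm, hEF, hEF, hEF, kW, trW_mul (S.Estar_mem_T _) (S.E_mem_T _),
    LinearMap.trace_mul_comm, ← trW_mul (S.E_mem_T _) (S.Estar_mem_T _), kstarW, nuW, add_zero]
  obtain h0 | h0 := eq_or_ne (trW S M (S.E M.t * S.Estar M.r)) 0
  · simp [h0]
  · field_simp

end TMod

/-- For nonzero `u ∈ E_t W`, nonzero `v ∈ E*_r W` and `0 ≤ i, j ≤ d`: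
`⟨E*_{r+i} u, E_{t+j} v⟩ = u_i(θ_{t+j}) k_i(W) k*_j(W) ⟨u,v⟩ / ν(W)`,
where `u_i = p_i / p_i(θ_t)`. -/
theorem stmt15 (S : TSetup X) (M : TMod S) (hd : 0 < M.d) :
    ∀ u ∈ M.W.map (S.E M.t).mulVecLin, u ≠ 0 →
    ∀ v ∈ M.W.map (S.Estar M.r).mulVecLin, v ≠ 0 →
    ∀ i ≤ M.d, ∀ j ≤ M.d,
      herm (S.Estar (M.r + i) *ᵥ u) (S.E (M.t + j) *ᵥ v) =
        ((pW S M i).eval ((S.θ (M.t + j) : ℂ)) / (pW S M i).eval ((S.θ M.t : ℂ)))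
          * kW S M i * kstarW S M j * herm u v / nuW S M := by
  intro u hu _ v hv hv0 i hi j _
  obtain ⟨u, rfl, hEu⟩ := exists_coe_eq_and_actW_eq (S.E_mem_T M.t) (S.isIdempotentElem_E M.t) hu
  obtain ⟨v, rfl, hFv⟩ :=
    exists_coe_eq_and_actW_eq (S.Estar_mem_T M.r) (S.isIdempotentElem_Estar M.r) hv
  have hmain := stmt15_general (fun w hw => Subtype.ext (eq_zero_of_herm_self_eq_zero hw))
    M.isThinTridiagonal (isIdempotentElem_actW (S.E_mem_T _) (S.isIdempotentElem_E M.t))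
    (isSelfAdjoint_actW (S.E_mem_T _) (S.isHermitian_E M.t)) (actW_E_mul_actW_A M.t)
    (isSelfAdjoint_actW (S.E_mem_T _) (S.isHermitian_E (M.t + j))) (actW_E_mul_actW_A (M.t + j))
    hEu hFv (Subtype.coe_ne_coe.1 hv0)
    fun k hk => M.dualProj_succ_mul_actW_A_mul_dualProj_ne_zero (hk.trans_le hi)
  rw [← M.pW_eq_tracePoly, ← M.kW_mul_kstarW_div_nuW, LinearMap.domRestrict₁₂_apply,
    LinearMap.domRestrict₁₂_apply, hermForm_apply, hermForm_apply, TMod.dualProj,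
    coe_actW (S.Estar_mem_T _), coe_actW (S.E_mem_T _)] at hmain
  rw [hmain]
  ring
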